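/- arXiv:2009.09604 — 2 statements merged into one kernel-verified Lean document; each statement's English description precedes it below -/
import Mathlib

section
/- Let ε > 0 and α, β ∈ (0,1) with α > e^ε·β, and let X be a probability distribution on the nonnegative integers. Set τ := (e^ε − e^ε·β − 1 + α)/(α − e^ε·β) (which is > 1 under these hypotheses). Then d_ε(Ber(α)+X ‖ Ber(β)+X) = (α − e^ε·β) · d_{ln τ}((1+X) ‖ X). -/
/-- Hockey-stick divergence on distributions over ℕ. -/
noncomputable def hsDiv (ε : ℝ) (P Q : ℕ → ℝ) : ℝ :=
  ∑' k, max (P k - Real.exp ε * Q k) 0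

/-- The Bernoulli distribution `Ber(p)` as a pmf on ℕ. -/
noncomputable def bern (p : ℝ) : ℕ → ℝ :=
  fun k => if k = 0 then 1 - p else if k = 1 then p else 0

/-- Convolution: pmf of the sum of independent samples from `A` and `B`. -/
noncomputable def conv (A B : ℕ → ℝ) : ℕ → ℝ :=
  fun k => ∑ j ∈ Finset.range (k + 1), A j * B (k - j)

/-- The distribution `1+X`: `X` shifted up by one. -/
noncomputable def shift1 (X : ℕ → ℝ) : ℕ → ℝ :=
  fun k => if k = 0 then 0 else X (k - 1)

/-!
Both `Ber(α) + X` and `Ber(β) + X` are combinations of `1 + X` and `X`. Hence the difference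
`(Ber(α) + X) - exp ε * (Ber(β) + X)` is, pointwise, `(α - exp ε * β) * (1 + X)` minus a multiple
of `X`; pulling the first, positive, coefficient out of the positive part turns the second one
into the threshold `τ`.
-/

theorem conv_eq_smul_add_smul_shift1 (A X : ℕ → ℝ) (hA : ∀ j, 2 ≤ j → A j = 0) :
    conv A X = A 1 • shift1 X + A 0 • X := by
  funext k
  cases k with
  | zero => simp [conv, shift1]
  | succ k =>
    have truncate : ∑ j ∈ Finset.range 2, A j * X (k + 1 - j) = conv A X (k + 1) := by
      refine Finset.sum_subset (Finset.range_subset_range.mpr (by lia)) fun j _ hj => ?_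
      rw [hA j (not_lt.mp (mt Finset.mem_range.mpr hj)), zero_mul]
    rw [← truncate, Finset.sum_range_succ, Finset.sum_range_one]
    simp [shift1, add_comm]

theorem conv_bern (p : ℝ) (X : ℕ → ℝ) :
    conv (bern p) X = p • shift1 X + (1 - p) • X := by
  have bern_eq_zero (j : ℕ) (hj : 2 ≤ j) : bern p j = 0 := by
    simp [bern, show j ≠ 0 by lia, show j ≠ 1 by lia]
  simpa [bern] using conv_eq_smul_add_smul_shift1 (bern p) X bern_eq_zero

theorem hsDiv_log {τ : ℝ} (hτ : 0 < τ) (P Q : ℕ → ℝ) :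
    hsDiv (Real.log τ) P Q = ∑' k, max (P k - τ * Q k) 0 := by
  rw [hsDiv, Real.exp_log hτ]

theorem hsDiv_smul_add_smul {ε a a' b b' : ℝ} (hP : Real.exp ε * b < a)
    (hQ : a' < Real.exp ε * b') (P Q : ℕ → ℝ) :
    hsDiv ε (a • P + a' • Q) (b • P + b' • Q) =
      (a - Real.exp ε * b) *
        hsDiv (Real.log ((Real.exp ε * b' - a') / (a - Real.exp ε * b))) P Q := by
  have hc : 0 < a - Real.exp ε * b := sub_pos.mpr hP
  rw [hsDiv_log (div_pos (sub_pos.mpr hQ) hc), ← tsum_mul_left]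
  refine tsum_congr fun k => ?_
  rw [mul_max_of_nonneg _ _ hc.le, mul_zero, mul_sub, ← mul_assoc, mul_div_cancel₀ _ hc.ne']
  congr 1
  simp only [Pi.add_apply, Pi.smul_apply, smul_eq_mul]
  ring

theorem stmt_17_general {ε α β : ℝ} (hαβ : Real.exp ε * β < α)
    (hαβ' : 1 - α < Real.exp ε * (1 - β)) (X : ℕ → ℝ) :
    hsDiv ε (conv (bern α) X) (conv (bern β) X) =
      (α - Real.exp ε * β) *
        hsDiv
          (Real.log ((Real.exp ε - Real.exp ε * β - 1 + α) / (α - Real.exp ε * β)))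
          (shift1 X) X := by
  have numerator_eq :
      Real.exp ε - Real.exp ε * β - 1 + α = Real.exp ε * (1 - β) - (1 - α) := by ring
  rw [conv_bern, conv_bern, hsDiv_smul_add_smul hαβ hαβ', numerator_eq]

/-- exact identity
`d_ε(Ber(α)+X ‖ Ber(β)+X) = (α − e^ε·β) · d_{ln τ}(1+X ‖ X)`. -/
theorem stmt_17 (ε α β : ℝ) (hε : 0 < ε) (hα0 : 0 < α) (hα1 : α < 1)
    (hβ0 : 0 < β) (hβ1 : β < 1) (hαβ : Real.exp ε * β < α)
    (X : ℕ → ℝ) (hXnn : ∀ k, 0 ≤ X k) (hXsum : ∑' k, X k = 1) :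
    hsDiv ε (conv (bern α) X) (conv (bern β) X)
      = (α - Real.exp ε * β) *
          hsDiv
            (Real.log ((Real.exp ε - Real.exp ε * β - 1 + α) / (α - Real.exp ε * β)))
            (shift1 X) X := by
  have hαβ' : 1 - α < Real.exp ε * (1 - β) := by linarith [Real.one_lt_exp_iff.mpr hε]
  exact stmt_17_general hαβ hαβ' X
end

section
/- Let X be a probability distribution on the nonnegative integers and ε > 0. Then d_ε(1+X ‖ X) ≥ (1/2) · Σ_{k ∈ ℕ : X(k) ≥ 2e^ε·X(k+1)} X(k); that is, d_ε(1+X ‖ X) is at least half the probability, under k ← X, that X(k) ≥ 2e^ε·X(k+1). -/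
/-! For every event `A`, the divergence `d_ε(P ‖ Q)` is at least `P(A) - e^ε Q(A)`. Test `1 + X`
against `X` on the shift by one of `{k | c e^ε X(k+1) ≤ X(k)}`: each point `k + 1` of it contributes
`X(k) - e^ε X(k+1) ≥ (1 - 1/c) X(k)`, and `c = 2` gives the constant `1/2`. -/

theorem tsum_comp_le_tsum_max_zero {ι κ : Type*} {f : κ → ℝ} (hf : Summable f) {i : ι → κ}
    (hi : Function.Injective i) : ∑' j, f (i j) ≤ ∑' k, max (f k) 0 := by
  have hmax : Summable fun k => max (f k) 0 :=
    hf.abs.of_nonneg_of_le (fun _ => le_max_right _ _)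
      fun k => max_le (le_abs_self (f k)) (abs_nonneg (f k))
  exact Summable.tsum_le_tsum_of_inj i hi (fun _ _ => le_max_right _ _)
    (fun _ => le_max_left _ _) (hf.comp_injective hi) hmax

theorem tsum_comp_sub_exp_mul_le_hsDiv {ι : Type*} (ε : ℝ) {P Q : ℕ → ℝ} (hP : Summable P)
    (hQ : Summable Q) {i : ι → ℕ} (hi : Function.Injective i) :
    ∑' j, (P (i j) - Real.exp ε * Q (i j)) ≤ hsDiv ε P Q :=
  tsum_comp_le_tsum_max_zero (hP.sub (hQ.mul_left (Real.exp ε))) hi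

theorem shift1_succ (X : ℕ → ℝ) (k : ℕ) : shift1 X (k + 1) = X k := rfl

theorem summable_shift1 {X : ℕ → ℝ} (hX : Summable X) : Summable (shift1 X) :=
  (summable_nat_add_iff 1).1 hX

theorem stmt_18_general (ε : ℝ) {c : ℝ} (hc : 0 < c) {X : ℕ → ℝ} (hX : Summable X) :
    (1 - c⁻¹) * ∑' k : {k : ℕ | c * Real.exp ε * X (k + 1) ≤ X k}, X (k : ℕ)
      ≤ hsDiv ε (shift1 X) X := by
  set A := {k : ℕ | c * Real.exp ε * X (k + 1) ≤ X k}
  have succ_injective : Function.Injective fun k : A => (k : ℕ) + 1 :=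
    (add_left_injective 1).comp Subtype.val_injective
  have pointwise (k : A) : (1 - c⁻¹) * X k ≤ X k - Real.exp ε * X (k + 1) := by
    have hk : Real.exp ε * X (k + 1) ≤ c⁻¹ * X k :=
      (le_inv_mul_iff₀ hc).2 ((mul_assoc _ _ _).symm.trans_le k.2)
    linarith
  calc (1 - c⁻¹) * ∑' k : A, X k
      = ∑' k : A, (1 - c⁻¹) * X k := tsum_mul_left.symm
    _ ≤ ∑' k : A, (X k - Real.exp ε * X (k + 1)) :=
        Summable.tsum_le_tsum pointwise ((hX.subtype A).mul_left _)
          ((hX.subtype A).sub ((hX.comp_injective succ_injective).mul_left _))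
    _ = ∑' k : A, (shift1 X (k + 1) - Real.exp ε * X (k + 1)) := by simp only [shift1_succ]
    _ ≤ hsDiv ε (shift1 X) X :=
        tsum_comp_sub_exp_mul_le_hsDiv ε (summable_shift1 hX) hX succ_injective

/-- `d_ε(1+X ‖ X)` is at least half the probability, under
`k ← X`, that `X k ≥ 2·e^ε·X (k+1)`. -/
theorem stmt_18 (ε : ℝ) (hε : 0 < ε)
    (X : ℕ → ℝ) (hXnn : ∀ k, 0 ≤ X k) (hXsum : ∑' k, X k = 1) :
    (1 / 2) * ∑' k : {k : ℕ | 2 * Real.exp ε * X (k + 1) ≤ X k}, X (k : ℕ)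
      ≤ hsDiv ε (shift1 X) X := by
  have hX : Summable X := not_imp_comm.1 tsum_eq_zero_of_not_summable (by simp [hXsum])
  simpa only [show (1 : ℝ) - 2⁻¹ = 1 / 2 by norm_num] using stmt_18_general ε two_pos hX
end
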